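/- Let q be a prime power and let ν, m₁, m₂, t be positive integers with m₁ ≥ m₂ ≥ t+1 and 2ν ≥ 2m₁ + m₂ + t + 2. If m₂ > 2t, or (m₁,m₂,t) ∈ {(2,2,1), (3,2,1)}, then c₁(ν,m₁,m₂,t) > c₂(ν,m₁,m₂,t). -/

import Mathlib

open Finset Module

noncomputable section

/-- Gaussian binomial coefficient `[n choose k]_q` as a rational number. -/
def gaussBinom (q n k : ℕ) : ℚ :=
  ∏ i ∈ Finset.range k, ((q : ℚ) ^ ((n : ℤ) - i) - 1) / ((q : ℚ) ^ ((k : ℤ) - i) - 1)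

/-- `N'(a; m; 2ν)`, the number of `m`-dim totally isotropic subspaces containing
a fixed `a`-dim one. -/
def Nprime (q a m ν : ℕ) : ℚ :=
  ∏ i ∈ Finset.Icc 1 (m - a), ((q : ℚ) ^ (2 * ((ν : ℤ) - m + i)) - 1) / ((q : ℚ) ^ (i : ℤ) - 1)

variable {K V : Type*} [Field K] [AddCommGroup V] [Module K V]

/-- A subspace is totally isotropic w.r.t. the bilinear form `f`. -/
def TotallyIsotropic (f : V →ₗ[K] V →ₗ[K] K) (W : Submodule K V) : Prop :=
  ∀ x ∈ W, ∀ y ∈ W, f x y = 0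

/-- `polar f m` = `𝒫_m`, the set of `m`-dimensional totally isotropic subspaces. -/
def polar (f : V →ₗ[K] V →ₗ[K] K) (m : ℕ) : Set (Submodule K V) :=
  {W | TotallyIsotropic f W ∧ finrank K W = m}

/-- `X` is a `t`-cover of the family `ℱ`. -/
def IsTCover (f : V →ₗ[K] V →ₗ[K] K) (t : ℕ) (ℱ : Set (Submodule K V))
    (X : Submodule K V) : Prop :=
  TotallyIsotropic f X ∧ ∀ F ∈ ℱ, t ≤ finrank K ↥(X ⊓ F)

/-- `τ_t(ℱ)`, the minimum dimension of a `t`-cover of `ℱ`. -/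
def tauCover (f : V →ₗ[K] V →ₗ[K] K) (t : ℕ) (ℱ : Set (Submodule K V)) : ℕ :=
  sInf {x | ∃ X, IsTCover f t ℱ X ∧ finrank K ↥X = x}

def C1 (f : V →ₗ[K] V →ₗ[K] K) (M T : Submodule K V) (m t : ℕ) : Set (Submodule K V) :=
  {F | F ∈ polar f m ∧ T ≤ F ∧ t + 1 ≤ finrank K ↥(F ⊓ M)}

def C2 (f : V →ₗ[K] V →ₗ[K] K) (M T : Submodule K V) (m : ℕ) : Set (Submodule K V) :=
  {F | F ∈ polar f m ∧ T ≤ F} ∪ {F | F ∈ polar f m ∧ F ≤ M}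

def C3 (f : V →ₗ[K] V →ₗ[K] K) (S : Submodule K V) (m : ℕ) : Set (Submodule K V) :=
  {F | F ∈ polar f m ∧ S ≤ F}

def C4 (f : V →ₗ[K] V →ₗ[K] K) (S : Submodule K V) (m t : ℕ) : Set (Submodule K V) :=
  {F | F ∈ polar f m ∧ t ≤ finrank K ↥(F ⊓ S)}

def s0 (q ν m s t : ℕ) : ℚ :=
  gaussBinom q (s - t) 1 * Nprime q (t + 1) m ν - q * gaussBinom q (s - t) 2 * Nprime q (t + 2) m ν


section helpers

variable [Fintype K] [Finite V]

lemma aux_card (W : Submodule K V) : Nat.card W = Fintype.card K ^ finrank K W := by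
  rw [Module.natCard_eq_pow_finrank (K := K), Nat.card_eq_fintype_card]

lemma aux_q2 : (2 : ℚ) ≤ (Fintype.card K : ℚ) := by
  exact_mod_cast (Fintype.one_lt_card (α := K))

open Classical in
lemma aux_diff [Fintype V] (A W : Submodule K V) (h : A ≤ W) :
    ((Finset.univ.filter (fun v : V => v ∈ W ∧ v ∉ A)).card : ℚ)
      = (Fintype.card K : ℚ) ^ finrank K W - (Fintype.card K : ℚ) ^ finrank K A := by
  have h1 : (Finset.univ.filter (fun v : V => v ∈ W)).card = Fintype.card K ^ finrank K W := by
    rw [← aux_card, Nat.card_eq_fintype_card, Fintype.card_subtype]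
  have h2 : (Finset.univ.filter (fun v : V => v ∈ A)).card = Fintype.card K ^ finrank K A := by
    rw [← aux_card, Nat.card_eq_fintype_card, Fintype.card_subtype]
  have h3 : (Finset.univ.filter (fun v : V => v ∈ W ∧ v ∉ A)).card
      + (Finset.univ.filter (fun v : V => v ∈ A)).card
      = (Finset.univ.filter (fun v : V => v ∈ W)).card := by
    rw [← Finset.card_union_of_disjoint]
    · congr 1
      ext v
      have := @h v
      simp
      tauto
    · rw [Finset.disjoint_left]
      intro v
      simp
  rw [h1, h2] at h3
  have : ((Finset.univ.filter (fun v : V => v ∈ W ∧ v ∉ A)).card : ℚ)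
      + (Fintype.card K : ℚ) ^ finrank K A = (Fintype.card K : ℚ) ^ finrank K W := by
    exact_mod_cast h3
  linarith

open Classical in
lemma aux_dc [Fintype V] [Fintype (Submodule K V)] (f : V →ₗ[K] V →ₗ[K] K)
    (A U : Submodule K V) (hAU : A ≤ U) (m : ℕ) (h : Submodule K V → ℚ) :
    ∑ v ∈ Finset.univ.filter (fun v : V => v ∈ U ∧ v ∉ A),
      ∑ F ∈ Finset.univ.filter (fun F => F ∈ C3 f (A ⊔ Submodule.span K {v}) m), h F
    = ∑ F ∈ Finset.univ.filter (fun F => F ∈ C3 f A m),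
      ((Fintype.card K : ℚ) ^ finrank K ↥(F ⊓ U) - (Fintype.card K : ℚ) ^ finrank K A) * h F := by
  rw [Finset.sum_comm' (t' := Finset.univ.filter (fun F => F ∈ C3 f A m))
    (s' := fun F => Finset.univ.filter (fun v : V => v ∈ F ⊓ U ∧ v ∉ A))]
  · apply Finset.sum_congr rfl
    intro F hF
    have hF' : F ∈ C3 f A m := by simpa using hF
    rw [Finset.sum_const, nsmul_eq_mul, aux_diff A (F ⊓ U) (le_inf hF'.2 hAU)]
  · intro v F
    simp only [C3, Finset.mem_filter, Finset.mem_univ, true_and, Set.mem_setOf_eq, sup_le_iff,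
      Submodule.span_singleton_le_iff_mem, Submodule.mem_inf]
    tauto

open Classical in
lemma aux_ncard [Fintype (Submodule K V)] (s : Set (Submodule K V)) :
    (s.ncard : ℚ) = ∑ F ∈ Finset.univ.filter (fun F => F ∈ s), (1 : ℚ) := by
  rw [Finset.sum_const, nsmul_eq_mul, mul_one, Set.ncard_eq_toFinset_card']
  congr 2
  ext; simp

def NN (q n a m : ℕ) : ℚ :=
  if m < a then 0 else ∏ i ∈ Finset.Ico a m, ((q : ℚ) ^ (n - i) - (q : ℚ) ^ i) / ((q : ℚ) ^ m - (q : ℚ) ^ i)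

lemma NN_self (q n m : ℕ) : NN q n m m = 1 := by simp [NN]

lemma NN_gt (q n a m : ℕ) (h : m < a) : NN q n a m = 0 := by simp [NN, h]

lemma NN_rec (q n a m : ℕ) (hq : 2 ≤ (q : ℚ)) (h : a < m) :
    ((q : ℚ) ^ m - (q : ℚ) ^ a) * NN q n a m
      = ((q : ℚ) ^ (n - a) - (q : ℚ) ^ a) * NN q n (a + 1) m := by
  have hlt : (q : ℚ) ^ a < (q : ℚ) ^ m := pow_lt_pow_right₀ (by linarith) h
  have : (q : ℚ) ^ m - (q : ℚ) ^ a ≠ 0 := by linarith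
  rw [NN, NN, if_neg (by omega), if_neg (by omega), Finset.prod_eq_prod_Ico_succ_bot h]
  field_simp

lemma NN_pos (q n a m : ℕ) (hq : 2 ≤ (q : ℚ)) (h : a ≤ m) (hn : 2 * m ≤ n) :
    0 < NN q n a m := by
  rw [NN, if_neg (by omega)]
  apply Finset.prod_pos
  intro i hi
  rw [Finset.mem_Ico] at hi
  have h1 : (q : ℚ) ^ i < (q : ℚ) ^ m := pow_lt_pow_right₀ (by linarith) hi.2
  have h2 : (q : ℚ) ^ i < (q : ℚ) ^ (n - i) := pow_lt_pow_right₀ (by linarith) (by omega)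
  apply div_pos <;> linarith

lemma aux_ext (f : V →ₗ[K] V →ₗ[K] K) (halt : ∀ v, f v v = 0) (A : Submodule K V) (a : ℕ)
    (hA : A ∈ polar f a) (v : V) (hv : v ∉ A) (h : ∀ x ∈ A, f x v = 0) :
    A ⊔ Submodule.span K {v} ∈ polar f (a + 1) := by
  have hs : ∀ x y, f x y = 0 → f y x = 0 := by
    intro x y hxy
    have := halt (x + y)
    simp [halt, hxy] at this
    exact this
  constructor
  · intro x hx y hy
    rw [Submodule.mem_sup] at hx hy
    obtain ⟨x1, hx1, x2, hx2, rfl⟩ := hx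
    obtain ⟨y1, hy1, y2, hy2, rfl⟩ := hy
    rw [Submodule.mem_span_singleton] at hx2 hy2
    obtain ⟨c, rfl⟩ := hx2
    obtain ⟨d, rfl⟩ := hy2
    simp [halt, hA.1 x1 hx1 y1 hy1, h x1 hx1, hs _ _ (h y1 hy1)]
  · have hd : A ⊓ Submodule.span K {v} = ⊥ := by
      rw [eq_bot_iff]
      rintro x ⟨hx, hx2⟩
      obtain ⟨c, rfl⟩ := Submodule.mem_span_singleton.1 hx2
      by_cases hc : c = 0
      · simp [hc]
      · exact absurd ((Submodule.smul_mem_iff _ hc).1 hx) hv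
    have h1 := Submodule.finrank_sup_add_finrank_inf_eq A (Submodule.span K {v})
    have hv0 : v ≠ 0 := fun h0 => hv (h0 ▸ A.zero_mem)
    rw [hd, finrank_bot, finrank_span_singleton hv0, hA.2] at h1
    omega

lemma aux_count (f : V →ₗ[K] V →ₗ[K] K) (halt : ∀ v, f v v = 0)
    (hnd : ∀ v, (∀ w, f v w = 0) → v = 0) (m : ℕ) (d : ℕ) :
    ∀ (a : ℕ), m < a + d → ∀ A ∈ polar f a,
      ((C3 f A m).ncard : ℚ) = NN (Fintype.card K) (finrank K V) a m := by
  classical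
  have := Fintype.ofFinite V
  have := Fintype.ofFinite (Submodule K V)
  have hs : ∀ x y, f x y = 0 → f y x = 0 := by
    intro x y hxy
    have := halt (x + y)
    simp [halt, hxy] at this
    exact this
  induction d with
  | zero =>
    intro a ha A hA
    rw [NN_gt _ _ _ _ (by omega)]
    have : C3 f A m = ∅ := by
      rw [Set.eq_empty_iff_forall_notMem]
      rintro F ⟨⟨_, hF⟩, hAF⟩
      have := Submodule.finrank_mono hAF
      rw [hF, hA.2] at this
      omega
    simp [this]
  | succ d ih =>
    intro a ha A hA
    rcases lt_trichotomy m a with hlt | heq | hgt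
    · rw [NN_gt _ _ _ _ (by omega)]
      have : C3 f A m = ∅ := by
        rw [Set.eq_empty_iff_forall_notMem]
        rintro F ⟨⟨_, hF⟩, hAF⟩
        have := Submodule.finrank_mono hAF
        rw [hF, hA.2] at this
        omega
      simp [this]
    · subst heq
      rw [NN_self]
      have : C3 f A m = {A} := by
        ext F
        simp only [Set.mem_singleton_iff]
        constructor
        · rintro ⟨⟨_, hF⟩, hAF⟩
          exact (Submodule.eq_of_le_of_finrank_eq hAF (by rw [hF, hA.2])).symm
        · rintro rfl
          exact ⟨hA, le_rfl⟩
      simp [this]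
    · have hq : (2 : ℚ) ≤ (Fintype.card K : ℚ) := aux_q2
      have hB : LinearMap.BilinForm.Nondegenerate f := by
        constructor
        · exact fun v hv => hnd v hv
        · exact fun v hv => hnd v (fun w => hs _ _ (hv w))
      have hR : LinearMap.BilinForm.IsRefl f := fun x y => hs x y
      set U := LinearMap.BilinForm.orthogonal f A with hU
      have hUd : finrank K U = finrank K V - a := by
        rw [hU, LinearMap.BilinForm.finrank_orthogonal hB, hA.2]
      have hmemU : ∀ v, v ∈ U ↔ ∀ x ∈ A, f x v = 0 := by
        intro v
        rw [hU, LinearMap.BilinForm.mem_orthogonal_iff]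
      have hAU : A ≤ U := fun v hv => (hmemU v).2 fun x hx => hA.1 x hx v hv
      have key := aux_dc f A U hAU m (fun _ => 1)
      have l1 : ∀ v ∈ Finset.univ.filter (fun v : V => v ∈ U ∧ v ∉ A),
          ∑ F ∈ Finset.univ.filter (fun F => F ∈ C3 f (A ⊔ Submodule.span K {v}) m), (1 : ℚ)
          = NN (Fintype.card K) (finrank K V) (a + 1) m := by
        intro v hv
        simp only [Finset.mem_filter, Finset.mem_univ, true_and] at hv
        rw [← aux_ncard]
        exact ih (a + 1) (by omega) _ (aux_ext f halt A a hA v hv.2 ((hmemU v).1 hv.1))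
      rw [Finset.sum_congr rfl l1, Finset.sum_const, nsmul_eq_mul, aux_diff A U hAU, hUd, hA.2,
        ← NN_rec _ _ _ _ hq hgt] at key
      have l2 : ∀ F ∈ Finset.univ.filter (fun F => F ∈ C3 f A m),
          ((Fintype.card K : ℚ) ^ finrank K ↥(F ⊓ U) - (Fintype.card K : ℚ) ^ a) * 1
          = ((Fintype.card K : ℚ) ^ m - (Fintype.card K : ℚ) ^ a) * 1 := by
        intro F hF
        simp only [Finset.mem_filter, Finset.mem_univ, true_and] at hF
        have : F ≤ U := fun v hv => (hmemU v).2 fun x hx => hF.1.1 x (hF.2 hx) v hv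
        rw [inf_eq_left.2 this, hF.1.2]
      rw [Finset.sum_congr rfl l2, ← Finset.mul_sum, ← aux_ncard] at key
      have hlt : (Fintype.card K : ℚ) ^ a < (Fintype.card K : ℚ) ^ m :=
        pow_lt_pow_right₀ (by linarith) hgt
      exact (mul_left_cancel₀ (by linarith) key).symm

lemma aux_count' (f : V →ₗ[K] V →ₗ[K] K) (halt : ∀ v, f v v = 0)
    (hnd : ∀ v, (∀ w, f v w = 0) → v = 0) (m a : ℕ) (A : Submodule K V) (hA : A ∈ polar f a) :
      ((C3 f A m).ncard : ℚ) = NN (Fintype.card K) (finrank K V) a m :=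
  aux_count f halt hnd m (m + 1) a (by omega) A hA

lemma aux_sub (f : V →ₗ[K] V →ₗ[K] K) (M A : Submodule K V) (k : ℕ) (hM : M ∈ polar f k)
    (h : A ≤ M) : A ∈ polar f (finrank K A) :=
  ⟨fun x hx y hy => hM.1 x (h hx) y (h hy), rfl⟩

lemma aux_C1 (f : V →ₗ[K] V →ₗ[K] K) (halt : ∀ v, f v v = 0)
    (hnd : ∀ v, (∀ w, f v w = 0) → v = 0) (m m' t s : ℕ) (M T : Submodule K V)
    (hM : M ∈ polar f m') (hTM : T ≤ M) (hT : finrank K T = t) (hs : m' = t + s) (Q : ℚ)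
    (hQ : Q = (Fintype.card K : ℚ)) :
    (Q ^ 2 - 1) * (Q ^ s - 1) * NN (Fintype.card K) (finrank K V) (t + 1) m
     - (Q ^ s - 1) * (Q ^ s - Q) * NN (Fintype.card K) (finrank K V) (t + 2) m
    ≤ (Q ^ 2 - 1) * (Q - 1) * (C1 f M T m t).ncard := by
  classical
  have := Fintype.ofFinite V
  have := Fintype.ofFinite (Submodule K V)
  have hq : (2 : ℚ) ≤ Q := hQ ▸ aux_q2
  have hTp : T ∈ polar f t := hT ▸ aux_sub f M T _ hM hTM
  have hperp : ∀ A ≤ M, ∀ v ∈ M, ∀ x ∈ A, f x v = 0 := fun A hA v hv x hx =>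
    hM.1 x (hA hx) v hv
  have e1 := aux_dc f T M hTM m (fun _ => 1)
  have e2 := aux_dc f T M hTM m (fun F => Q ^ finrank K ↥(F ⊓ M) - Q ^ (t + 1))
  have l1 : ∀ v ∈ Finset.univ.filter (fun v : V => v ∈ M ∧ v ∉ T),
      ∑ F ∈ Finset.univ.filter (fun F => F ∈ C3 f (T ⊔ Submodule.span K {v}) m), (1 : ℚ)
      = NN (Fintype.card K) (finrank K V) (t + 1) m := by
    intro v hv
    simp only [Finset.mem_filter, Finset.mem_univ, true_and] at hv
    rw [← aux_ncard]
    exact aux_count' f halt hnd m (t + 1) _ (aux_ext f halt T t hTp v hv.2 (hperp T hTM v hv.1))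
  have l2 : ∀ v ∈ Finset.univ.filter (fun v : V => v ∈ M ∧ v ∉ T),
      ∑ F ∈ Finset.univ.filter (fun F => F ∈ C3 f (T ⊔ Submodule.span K {v}) m),
        (Q ^ finrank K ↥(F ⊓ M) - Q ^ (t + 1))
      = (Q ^ (t + s) - Q ^ (t + 1)) * NN (Fintype.card K) (finrank K V) (t + 2) m := by
    intro v hv
    simp only [Finset.mem_filter, Finset.mem_univ, true_and] at hv
    have hA := aux_ext f halt T t hTp v hv.2 (hperp T hTM v hv.1)
    have hAM : T ⊔ Submodule.span K {v} ≤ M := sup_le hTM (by simpa [Submodule.span_le] using hv.1)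
    have e3 := aux_dc f _ M hAM m (fun _ => 1)
    have l3 : ∀ w ∈ Finset.univ.filter (fun w : V => w ∈ M ∧ w ∉ T ⊔ Submodule.span K {v}),
      ∑ F ∈ Finset.univ.filter
        (fun F => F ∈ C3 f (T ⊔ Submodule.span K {v} ⊔ Submodule.span K {w}) m), (1 : ℚ)
      = NN (Fintype.card K) (finrank K V) (t + 2) m := by
      intro w hw
      simp only [Finset.mem_filter, Finset.mem_univ, true_and] at hw
      rw [← aux_ncard]
      exact aux_count' f halt hnd m (t + 2) _ (aux_ext f halt _ (t + 1) hA w hw.2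
        (hperp _ hAM w hw.1))
    rw [Finset.sum_congr rfl l3, Finset.sum_const, nsmul_eq_mul, aux_diff _ M hAM, hM.2, hs,
      hA.2, ← hQ] at e3
    simp only [mul_one] at e3
    exact e3.symm
  rw [Finset.sum_congr rfl l1, Finset.sum_const, nsmul_eq_mul, aux_diff _ M hTM, hM.2, hs,
      hTp.2, ← hQ] at e1
  rw [Finset.sum_congr rfl l2, Finset.sum_const, nsmul_eq_mul, aux_diff _ M hTM, hM.2, hs,
      hTp.2, ← hQ] at e2
  have hC : ((C1 f M T m t).ncard : ℚ) = ∑ F ∈ Finset.univ.filter (fun F => F ∈ C3 f T m),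
      if t + 1 ≤ finrank K ↥(F ⊓ M) then (1 : ℚ) else 0 := by
    rw [aux_ncard, ← Finset.sum_filter, Finset.filter_filter]
    apply Finset.sum_congr _ (fun _ _ => rfl)
    ext F
    simp only [C1, C3, Finset.mem_filter, Finset.mem_univ, true_and, Set.mem_setOf_eq, and_assoc]
  have hpt : ∀ F ∈ Finset.univ.filter (fun F => F ∈ C3 f T m),
      Q ^ t * (Q ^ 2 - 1) * ((Q ^ finrank K ↥(F ⊓ M) - Q ^ t) * 1)
       - (Q ^ finrank K ↥(F ⊓ M) - Q ^ t) * (Q ^ finrank K ↥(F ⊓ M) - Q ^ (t + 1))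
      ≤ Q ^ t * Q ^ t * ((Q ^ 2 - 1) * (Q - 1)) *
        if t + 1 ≤ finrank K ↥(F ⊓ M) then (1 : ℚ) else 0 := by
    intro F hF
    simp only [Finset.mem_filter, Finset.mem_univ, true_and] at hF
    have hle := Submodule.finrank_mono (le_inf hF.2 hTM)
    rw [hT] at hle
    obtain ⟨d, hd⟩ := Nat.exists_eq_add_of_le hle
    rw [hd, pow_add, pow_add]
    have hP : (0 : ℚ) < Q ^ t := by positivity
    by_cases hd0 : d = 0
    · subst hd0
      simp
    · rw [if_pos (by omega)]
      have hx : 0 ≤ (Q ^ d - Q) * (Q ^ d - Q ^ 2) := by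
        rcases Nat.lt_or_ge d 2 with h | h
        · have : d = 1 := by omega
          subst this
          simp
        · have h1 : Q ^ 2 ≤ Q ^ d := pow_le_pow_right₀ (by linarith) h
          have h2 : Q ≤ Q ^ 2 := by nlinarith
          exact mul_nonneg (by linarith) (by linarith)
      have := mul_nonneg (mul_pos hP hP).le hx
      nlinarith [this]
  have hsum := Finset.sum_le_sum hpt
  rw [Finset.sum_sub_distrib, ← Finset.mul_sum, ← Finset.mul_sum, ← hC, ← e1, ← e2] at hsum
  have hP : (0 : ℚ) < Q ^ t * Q ^ t := by positivity
  refine le_of_mul_le_mul_left ?_ hP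
  calc _ = _ := ?_
    _ ≤ _ := hsum
    _ = _ := by ring
  ring

lemma aux_C4 (f : V →ₗ[K] V →ₗ[K] K) (halt : ∀ v, f v v = 0)
    (hnd : ∀ v, (∀ w, f v w = 0) → v = 0) (m t : ℕ) (S : Submodule K V)
    (hS : S ∈ polar f (t + 1)) (Q : ℚ) (hQ : Q = (Fintype.card K : ℚ)) :
    (Q - 1) * (C4 f S m t).ncard ≤ (Q ^ (t + 1) - 1) * NN (Fintype.card K) (finrank K V) t m := by
  classical
  have := Fintype.ofFinite (Submodule K V)
  have : Finite (Dual K S) := Module.finite_of_finite K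
  have := Fintype.ofFinite (Dual K S)
  have hq : (2 : ℚ) ≤ Q := hQ ▸ aux_q2
  set H : Dual K S → Submodule K V := fun φ => (LinearMap.ker φ).map S.subtype with hH
  have hfin : ∀ φ : Dual K S, φ ≠ 0 → finrank K (LinearMap.ker φ) = t := by
    intro φ hφ
    have h1 := Module.Dual.finrank_ker_add_one_of_ne_zero hφ
    rw [hS.2] at h1
    omega
  have hHp : ∀ φ : Dual K S, φ ≠ 0 → H φ ∈ polar f t := by
    intro φ hφ
    have h1 : finrank K (H φ) = t := by
      rw [hH, Submodule.finrank_map_subtype_eq, hfin φ hφ]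
    have := aux_sub f S (H φ) _ hS (Submodule.map_subtype_le _ _)
    rwa [h1] at this
  have hcard : ((Finset.univ.filter (fun φ : Dual K S => φ ≠ 0)).card : ℚ) = Q ^ (t + 1) - 1 := by
    have h1 : Fintype.card (Dual K S) = Fintype.card K ^ (t + 1) := by
      rw [← hS.2, ← Subspace.dual_finrank_eq, Module.card_eq_pow_finrank (K := K)]
    rw [Finset.filter_ne', Finset.card_erase_of_mem (Finset.mem_univ _), Finset.card_univ, h1,
      Nat.cast_sub (Nat.one_le_pow _ _ Fintype.card_pos), hQ]
    simp
  rw [← hcard, ← nsmul_eq_mul, ← Finset.sum_const]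
  have h1 : ∀ φ ∈ Finset.univ.filter (fun φ : Dual K S => φ ≠ 0),
      NN (Fintype.card K) (finrank K V) t m
      = ∑ F ∈ Finset.univ.filter (fun F => F ∈ C3 f (H φ) m), (1 : ℚ) := by
    intro φ hφ
    rw [← aux_ncard]
    exact (aux_count' f halt hnd m t _ (hHp φ (by simpa using hφ))).symm
  rw [Finset.sum_congr rfl h1]
  rw [Finset.sum_comm' (t' := Finset.univ)
    (s' := fun F => Finset.univ.filter (fun φ : Dual K S => φ ≠ 0 ∧ F ∈ C3 f (H φ) m))
    (by intro φ F; simp)]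
  rw [aux_ncard, Finset.mul_sum]
  refine le_trans (Finset.sum_le_sum ?_) (Finset.sum_le_sum_of_subset_of_nonneg
    (Finset.filter_subset _ _) ?_)
  · intro F hF
    simp only [Finset.mem_filter, Finset.mem_univ, true_and] at hF
    obtain ⟨hFp, hFt⟩ := hF
    have hF' : t ≤ finrank K (Submodule.comap S.subtype F) := by
      have e : Submodule.map S.subtype (Submodule.comap S.subtype F) = F ⊓ S := by
        rw [Submodule.map_comap_subtype, inf_comm]
      rw [← e, Submodule.finrank_map_subtype_eq] at hFt
      exact hFt
    obtain ⟨φ, hφ, hle⟩ : ∃ φ : Dual K S, φ ≠ 0 ∧ H φ ≤ F := by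
      by_cases htop : Submodule.comap S.subtype F = ⊤
      · have : Nontrivial S := Module.nontrivial_of_finrank_pos (R := K) (by rw [hS.2]; omega)
        obtain ⟨φ, hφ⟩ := exists_ne (0 : Dual K S)
        refine ⟨φ, hφ, ?_⟩
        rw [hH, Submodule.map_le_iff_le_comap, htop]
        exact le_top
      · obtain ⟨φ, hφ, hk⟩ := Submodule.exists_le_ker_of_lt_top _ (lt_top_iff_ne_top.2 htop)
        refine ⟨φ, hφ, ?_⟩
        rw [hH, Submodule.map_le_iff_le_comap]
        refine (Submodule.eq_of_le_of_finrank_le hk ?_).ge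
        rw [hfin φ hφ]
        exact hF'
    rw [Finset.sum_const, nsmul_eq_mul, mul_one, mul_one]
    have hsub : Finset.univ.image (fun c : Kˣ => (c : K) • φ) ⊆
        Finset.univ.filter (fun φ : Dual K S => φ ≠ 0 ∧ F ∈ C3 f (H φ) m) := by
      intro ψ hψ
      simp only [Finset.mem_image, Finset.mem_univ, true_and] at hψ
      obtain ⟨c, rfl⟩ := hψ
      simp only [Finset.mem_filter, Finset.mem_univ, true_and]
      refine ⟨smul_ne_zero c.ne_zero hφ, hFp, ?_⟩
      have : H ((c : K) • φ) = H φ := by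
        simp only [hH]
        rw [LinearMap.ker_smul _ _ c.ne_zero]
      rw [this]
      exact hle
    have hc := Finset.card_le_card hsub
    rw [Finset.card_image_of_injective, Finset.card_univ, Fintype.card_units] at hc
    · have h3 : 1 ≤ Fintype.card K := Fintype.card_pos
      have : ((Fintype.card K - 1 : ℕ) : ℚ) ≤ _ := Nat.cast_le.2 hc
      rw [Nat.cast_sub h3, ← hQ] at this
      simpa using this
    · intro c d hcd
      exact Units.ext (smul_left_injective K hφ hcd)
  · intro F _ _
    exact Finset.sum_nonneg fun _ _ => zero_le_one

lemma aux_C2 (f : V →ₗ[K] V →ₗ[K] K) (halt : ∀ v, f v v = 0)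
    (hnd : ∀ v, (∀ w, f v w = 0) → v = 0) (m t : ℕ) (M T : Submodule K V)
    (hM : M ∈ polar f (m + 1)) (hTM : T ≤ M) (hT : finrank K T = t) (Q : ℚ)
    (hQ : Q = (Fintype.card K : ℚ)) :
    NN (Fintype.card K) (finrank K V) t m ≤ (C2 f M T m).ncard := by
  rw [← aux_count' f halt hnd m t T (hT ▸ aux_sub f M T _ hM hTM)]
  exact_mod_cast Set.ncard_le_ncard (Set.subset_union_left) (Set.toFinite _)

lemma aux_C2' (f : V →ₗ[K] V →ₗ[K] K) (halt : ∀ v, f v v = 0)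
    (hnd : ∀ v, (∀ w, f v w = 0) → v = 0) (M T : Submodule K V)
    (hM : M ∈ polar f 3) (hTM : T ≤ M) (hT : finrank K T = 1) (Q : ℚ)
    (hQ : Q = (Fintype.card K : ℚ)) :
    NN (Fintype.card K) (finrank K V) 1 2 + Q ^ 2 ≤ (C2 f M T 2).ncard := by
  classical
  have : Finite (Dual K M) := Module.finite_of_finite K
  rw [← aux_count' f halt hnd 2 1 T (hT ▸ aux_sub f M T _ hM hTM)]
  obtain ⟨e, heT, he0⟩ : ∃ e ∈ T, e ≠ 0 := by
    apply Submodule.exists_mem_ne_zero_of_ne_bot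
    rintro rfl
    simp at hT
  set e' : M := ⟨e, hTM heT⟩ with he'
  have he'0 : e' ≠ 0 := fun h => he0 (congrArg Subtype.val h)
  obtain ⟨φ0, hφ0⟩ := Module.Projective.exists_dual_ne_zero K he'0
  set φ1 : Dual K M := (φ0 e')⁻¹ • φ0 with hφ1
  have h11 : φ1 e' = 1 := by simp [hφ1, hφ0]
  set W := (Submodule.span K {e'}).dualAnnihilator with hW
  have hWe : ∀ ψ : W, (ψ : Dual K M) e' = 0 := by
    intro ψ
    exact (Submodule.mem_dualAnnihilator _).1 ψ.2 e' (Submodule.mem_span_singleton_self e')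
  have hWc : Nat.card W = Fintype.card K ^ 2 := by
    rw [Module.natCard_eq_pow_finrank (K := K), Nat.card_eq_fintype_card]
    have := Subspace.finrank_add_finrank_dualAnnihilator_eq (Submodule.span K {e'})
    rw [finrank_span_singleton he'0, hM.2, ← hW] at this
    have h2 : finrank K W = 2 := by omega
    rw [h2]
  set g : W → Submodule K V := fun ψ => (LinearMap.ker (φ1 + (ψ : Dual K M))).map M.subtype with hg
  have hval : ∀ ψ : W, (φ1 + (ψ : Dual K M)) e' = 1 := by
    intro ψ
    rw [LinearMap.add_apply, h11, hWe, add_zero]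
  have hinj : Function.Injective g := by
    intro a b hab
    have hk := Submodule.map_injective_of_injective M.injective_subtype hab
    apply Subtype.ext
    ext x
    have hx : x - (φ1 + (a : Dual K M)) x • e' ∈ LinearMap.ker (φ1 + (a : Dual K M)) := by
      rw [LinearMap.mem_ker, map_sub, map_smul, hval, smul_eq_mul, mul_one, sub_self]
    rw [hk, LinearMap.mem_ker, map_sub, map_smul, hval, smul_eq_mul, mul_one, sub_eq_zero] at hx
    simp only [LinearMap.add_apply] at hx
    exact (add_left_cancel hx).symm
  have hr : (Set.range g).ncard = Fintype.card K ^ 2 := by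
    rw [← hWc, ← Set.image_univ, Set.ncard_image_of_injective _ hinj, Set.ncard_univ]
  have hsub : C3 f T 2 ∪ Set.range g ⊆ C2 f M T 2 := by
    apply Set.union_subset_union_right
    rintro _ ⟨ψ, rfl⟩
    have hle : g ψ ≤ M := Submodule.map_subtype_le _ _
    refine ⟨?_, hle⟩
    have h2 : finrank K (g ψ) = 2 := by
      have hne : φ1 + (ψ : Dual K M) ≠ 0 := by
        intro h0
        have := hval ψ
        rw [h0] at this
        simp at this
      have h1 := Module.Dual.finrank_ker_add_one_of_ne_zero hne
      rw [hM.2] at h1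
      rw [hg, Submodule.finrank_map_subtype_eq]
      omega
    have := aux_sub f M _ _ hM hle
    rwa [h2] at this
  have hdis : Disjoint (C3 f T 2) (Set.range g) := by
    rw [Set.disjoint_left]
    rintro _ ⟨_, hTF⟩ ⟨ψ, rfl⟩
    obtain ⟨x, hx, hxe⟩ := hTF heT
    have : x = e' := Subtype.ext hxe
    subst this
    have h1 := hval ψ
    rw [LinearMap.mem_ker.1 hx] at h1
    exact zero_ne_one h1
  have := Set.ncard_le_ncard hsub (Set.toFinite _)
  rw [Set.ncard_union_eq hdis (Set.toFinite _) (Set.toFinite _), hr] at this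
  rw [hQ]
  exact_mod_cast this

end helpers

set_option maxHeartbeats 1600000 in
theorem stmt_15
    (q ν m₁ m₂ t : ℕ) (hq : IsPrimePow q)
    {K : Type} [Field K] [Fintype K] (hK : Fintype.card K = q)
    (f : (Fin (2 * ν) → K) →ₗ[K] (Fin (2 * ν) → K) →ₗ[K] K)
    (halt : ∀ v, f v v = 0)
    (hnd : ∀ v, (∀ w, f v w = 0) → v = 0)
    (hν : 0 < ν) (ht : 0 < t) (hm : m₂ ≤ m₁) (hmt : t + 1 ≤ m₂)
    (hdim : 2 * m₁ + m₂ + t + 2 ≤ 2 * ν)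
    (hcase : 2 * t < m₂ ∨ (m₁, m₂, t) = (2, 2, 1) ∨ (m₁, m₂, t) = (3, 2, 1))
    (M : Submodule K (Fin (2 * ν) → K)) (hM : M ∈ polar f (m₂ + 1))
    (T : Submodule K (Fin (2 * ν) → K)) (hTM : T ≤ M) (hT : finrank K T = t)
    (S : Submodule K (Fin (2 * ν) → K)) (hS : S ∈ polar f (t + 1)) :
    (C3 f S m₁).ncard * (C4 f S m₂ t).ncard <
      (C1 f M T m₁ t).ncard * (C2 f M T m₂).ncard := by
  have hq2 : (2 : ℚ) ≤ (q : ℚ) := hK ▸ aux_q2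
  have hV : finrank K (Fin (2 * ν) → K) = 2 * ν := by simp
  have hk : (Fintype.card K : ℚ) = q := by rw [hK]
  have b3 := aux_count' f halt hnd m₁ (t + 1) S hS
  have b4 := aux_C4 f halt hnd m₂ t S hS q hk.symm
  have b1 := aux_C1 f halt hnd m₁ (m₂ + 1) t (m₂ + 1 - t) M T hM hTM hT (by omega) q hk.symm
  have b2 := aux_C2 f halt hnd m₂ t M T hM hTM hT q hk.symm
  rw [hV, hK] at b1 b2 b3 b4
  suffices h : ((C3 f S m₁).ncard : ℚ) * (C4 f S m₂ t).ncard <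
      (C1 f M T m₁ t).ncard * (C2 f M T m₂).ncard by exact_mod_cast h
  rcases hcase with hc | hc | hc
  · have hN2 := NN_pos q (2 * ν) t m₂ hq2 (by omega) (by omega)
    have hA := NN_pos q (2 * ν) (t + 1) m₁ hq2 (by omega) (by omega)
    have hB := NN_pos q (2 * ν) (t + 2) m₁ hq2 (by omega) (by omega)
    have hrec := NN_rec q (2 * ν) (t + 1) m₁ hq2 (by omega)
    generalize ((C1 f M T m₁ t).ncard : ℚ) = c1 at *
    generalize ((C2 f M T m₂).ncard : ℚ) = c2 at *
    generalize ((C3 f S m₁).ncard : ℚ) = c3 at *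
    generalize ((C4 f S m₂ t).ncard : ℚ) = c4 at *
    simp only [add_assoc, Nat.reduceAdd] at hrec
    generalize NN q (2 * ν) t m₂ = N2 at *
    generalize NN q (2 * ν) (t + 1) m₁ = A at *
    generalize NN q (2 * ν) (t + 2) m₁ = B at *
    have p1 : (q : ℚ) ^ (t + 1) < (q : ℚ) ^ m₁ := pow_lt_pow_right₀ (by linarith) (by omega)
    have p2 : (q : ℚ) ^ (m₂ + 1 - t) * (q : ℚ) ^ m₁ ≤ (q : ℚ) ^ (2 * ν - (t + 1)) := by
      rw [← pow_add]
      exact pow_le_pow_right₀ (by linarith) (by omega)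
    have p3 : (q : ℚ) * (q : ℚ) ^ (t + 1) ≤ (q : ℚ) ^ (m₂ + 1 - t) := by
      rw [← pow_succ']
      exact pow_le_pow_right₀ (by linarith) (by omega)
    have p4 : (1 : ℚ) < (q : ℚ) ^ (t + 1) := one_lt_pow₀ (by linarith) (by omega)
    generalize (q : ℚ) ^ (m₂ + 1 - t) = X at *
    generalize (q : ℚ) ^ (t + 1) = Y at *
    generalize (q : ℚ) ^ m₁ = Z at *
    generalize (q : ℚ) ^ (2 * ν - (t + 1)) = W at *
    generalize (q : ℚ) = Q at *
    have hX2 : 2 * Y ≤ X := by nlinarith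
    have hAX : X * B ≤ A := by
      have : (Z - Y) * (X * B) ≤ (Z - Y) * A := by
        rw [hrec]
        have : (Z - Y) * X ≤ W - Y := by nlinarith
        nlinarith
      exact le_of_mul_le_mul_left this (by linarith)
    have k1 : (X - 1) * (X - Q) * B < (Q ^ 2 - 1) * (X - Y) * A := by
      have h1 : (X - 1) * (X - Q) ≤ X * X := by nlinarith
      have h2 : (X - 1) * (X - Q) * B ≤ X * A := by nlinarith
      have h3 : X < (Q ^ 2 - 1) * (X - Y) := by nlinarith
      nlinarith
    have k2 : (Y - 1) * A < (Q - 1) * c1 := by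
      have : (Q ^ 2 - 1) * ((Y - 1) * A) < (Q ^ 2 - 1) * ((Q - 1) * c1) := by nlinarith
      exact lt_of_mul_lt_mul_left this (by nlinarith)
    have hc1 : 0 ≤ c1 := by
      by_contra hneg
      nlinarith [mul_pos (sub_pos.2 p4) hA]
    have : (Q - 1) * (c3 * c4) < (Q - 1) * (c1 * c2) := by
      calc (Q - 1) * (c3 * c4) = A * ((Q - 1) * c4) := by rw [b3]; ring
        _ ≤ A * ((Y - 1) * N2) := by gcongr
        _ = ((Y - 1) * A) * N2 := by ring
        _ < ((Q - 1) * c1) * N2 := by gcongr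
        _ ≤ ((Q - 1) * c1) * c2 := by
          apply mul_le_mul_of_nonneg_left b2
          exact mul_nonneg (by linarith) hc1
        _ = _ := by ring
    exact lt_of_mul_lt_mul_left this (by linarith)
  all_goals
    simp only [Prod.mk.injEq] at hc
    obtain ⟨rfl, rfl, rfl⟩ := hc
    have b2' := aux_C2' f halt hnd M T hM hTM hT q hk.symm
    have hN2 := NN_pos q (2 * ν) 1 2 hq2 (by omega) (by omega)
    have hNr := NN_rec q (2 * ν) 1 2 hq2 (by omega)
    rw [hV, hK] at b2'
    simp only [Nat.reduceAdd, Nat.reduceSub, NN_self] at b1 b2' b3 b4 hNr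
    generalize ((C2 f M T 2).ncard : ℚ) = c2 at *
    generalize ((C4 f S 2 1).ncard : ℚ) = c4 at *
  · rw [NN_gt q (2 * ν) 3 2 (by omega)] at b1
    generalize ((C1 f M T 2 1).ncard : ℚ) = c1 at *
    generalize ((C3 f S 2).ncard : ℚ) = c3 at *
    generalize NN q (2 * ν) 1 2 = N2 at *
    generalize (q : ℚ) = Q at *
    have k4 : c4 ≤ (Q + 1) * N2 := by
      apply le_of_mul_le_mul_left (a := Q - 1) _ (by linarith)
      linarith
    have k1 : Q + 1 ≤ c1 := by
      apply le_of_mul_le_mul_left (a := (Q ^ 2 - 1) * (Q - 1)) _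
        (mul_pos (by nlinarith) (by linarith))
      linarith
    subst b3
    nlinarith
  · have hA := NN_pos q (2 * ν) 2 3 hq2 (by omega) (by omega)
    have hAr := NN_rec q (2 * ν) 2 3 hq2 (by omega)
    simp only [Nat.reduceAdd, Nat.reduceSub, NN_self] at hAr
    have p0 : (q : ℚ) ^ (2 * ν - 1) = q * (q : ℚ) ^ (2 * ν - 2) := by
      rw [← pow_succ']; congr 1; omega
    have p1 : (q : ℚ) ^ 8 ≤ (q : ℚ) ^ (2 * ν - 2) :=
      pow_le_pow_right₀ (by linarith) (by omega)
    generalize ((C1 f M T 3 1).ncard : ℚ) = c1 at *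
    generalize ((C3 f S 3).ncard : ℚ) = c3 at *
    generalize NN q (2 * ν) 1 2 = B at *
    generalize NN q (2 * ν) 2 3 = A at *
    rw [p0] at hNr
    generalize (q : ℚ) ^ (2 * ν - 2) = W at *
    generalize (q : ℚ) = Q at *
    have k4 : c4 ≤ (Q + 1) * B := by
      apply le_of_mul_le_mul_left (a := Q - 1) _ (by linarith)
      linarith
    have k1 : (Q + 1) * A - Q ≤ c1 := by
      apply le_of_mul_le_mul_left (a := (Q ^ 2 - 1) * (Q - 1)) _
        (mul_pos (by nlinarith) (by linarith))
      linarith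
    have kB' : (Q - 1) * B = W - 1 := by
      apply mul_left_cancel₀ (a := Q) (by linarith)
      linear_combination hNr
    have kB : B = Q ^ 2 * A + Q + 1 := by
      apply mul_left_cancel₀ (a := Q - 1) (by linarith)
      linear_combination kB' - hAr
    have kA : Q ^ 3 ≤ A := by
      have hQ3 : 0 < Q ^ 3 - Q ^ 2 := by
        have h1 : 0 < Q ^ 2 * (Q - 1) := mul_pos (by positivity) (by linarith)
        linarith
      apply le_of_mul_le_mul_left (a := Q ^ 3 - Q ^ 2) _ hQ3
      rw [hAr]
      have h6 : Q ^ 6 ≤ Q ^ 8 := pow_le_pow_right₀ (by linarith) (by omega)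
      have h5 : Q ^ 2 ≤ Q ^ 5 := pow_le_pow_right₀ (by linarith) (by omega)
      have h7 : (Q ^ 3 - Q ^ 2) * Q ^ 3 = Q ^ 6 - Q ^ 5 := by ring
      linarith
    rw [b3]
    have hQ8 : 8 ≤ Q ^ 3 := by
      have : (2 : ℚ) ^ 3 ≤ Q ^ 3 := by gcongr
      linarith
    have hk1 : 0 ≤ (Q + 1) * A - Q := by
      have : Q * 1 ≤ Q * A := by
        apply mul_le_mul_of_nonneg_left <;> linarith
      linarith
    have hfin : Q ^ 3 + Q ^ 2 + Q < Q ^ 2 * A := by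
      have h5 : Q ^ 2 * Q ^ 3 ≤ Q ^ 2 * A := by gcongr
      have h1 : Q ≤ Q ^ 2 := le_self_pow₀ (by linarith) (by omega)
      have h2 : Q ^ 2 ≤ Q ^ 3 := pow_le_pow_right₀ (by linarith) (by omega)
      have h4 : 4 ≤ Q ^ 2 := by
        have : (2 : ℚ) ^ 2 ≤ Q ^ 2 := by gcongr
        linarith
      have h6 : 4 * Q ^ 3 ≤ Q ^ 2 * Q ^ 3 := by gcongr
      linarith
    calc A * c4 ≤ A * ((Q + 1) * B) := by gcongr
      _ < ((Q + 1) * A - Q) * (B + Q ^ 2) := by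
        rw [kB]
        linear_combination hfin
      _ ≤ c1 * c2 := by
        apply mul_le_mul k1 b2' (by positivity) (by linarith)

end
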